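/- arXiv:2506.09618 — 2 statements merged into one kernel-verified Lean document; each statement's English description precedes it below -/
import Mathlib

section
/- Let C be an arbitrary set of corner-interval minors of M. Then the toric ideal J_C is a minimal prime ideal of I(C). -/
open MvPolynomial

/-- A 2-minor `[a₁,a₂|b₁,b₂]` (with `a₁ < a₂`, `b₁ < b₂`) of the `m × n` matrix
of indeterminates `M = (x_{ij})`. -/
structure Minor2 (m n : ℕ) where
  a1 : Fin m
  a2 : Fin m
  b1 : Fin n
  b2 : Fin n
  ha : a1 < a2
  hb : b1 < b2

namespace Minor2

variable {m n : ℕ}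

/-- The vertex set of a 2-minor. -/
def vertexSet (δ : Minor2 m n) : Set (Fin m × Fin n) :=
  {(δ.a1, δ.b1), (δ.a1, δ.b2), (δ.a2, δ.b1), (δ.a2, δ.b2)}

/-- `{p,q}` is one of the two vertical edges of the minor `δ`. -/
def VertEdge (δ : Minor2 m n) (p q : Fin m × Fin n) : Prop :=
  ({p, q} : Set (Fin m × Fin n)) = {(δ.a1, δ.b1), (δ.a2, δ.b1)} ∨
  ({p, q} : Set (Fin m × Fin n)) = {(δ.a1, δ.b2), (δ.a2, δ.b2)}

/-- `{p,q}` is one of the two horizontal edges of the minor `δ`. -/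
def HorizEdge (δ : Minor2 m n) (p q : Fin m × Fin n) : Prop :=
  ({p, q} : Set (Fin m × Fin n)) = {(δ.a1, δ.b1), (δ.a1, δ.b2)} ∨
  ({p, q} : Set (Fin m × Fin n)) = {(δ.a2, δ.b1), (δ.a2, δ.b2)}

/-- `{p,q}` is an edge (vertical or horizontal) of the minor `δ`. -/
def IsEdge (δ : Minor2 m n) (p q : Fin m × Fin n) : Prop :=
  δ.VertEdge p q ∨ δ.HorizEdge p q

/-- The binomial `f_δ = x_{a₁b₁}x_{a₂b₂} − x_{a₁b₂}x_{a₂b₁}` of the 2-minor `δ`. -/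
noncomputable def binom (K : Type*) [Field K] (δ : Minor2 m n) : MvPolynomial (Fin m × Fin n) K :=
  X (δ.a1, δ.b1) * X (δ.a2, δ.b2) - X (δ.a1, δ.b2) * X (δ.a2, δ.b1)

end Minor2

/-- The vertex set `V(C)` of a collection `C` of 2-minors. -/
def vertexSetOf {m n : ℕ} (C : Set (Minor2 m n)) : Set (Fin m × Fin n) :=
  ⋃ δ ∈ C, δ.vertexSet

/-- The binomial ideal `I(C)` generated by the binomials of the minors in `C`. -/
noncomputable def minorIdeal (K : Type*) [Field K] {m n : ℕ} (C : Set (Minor2 m n)) :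
    Ideal (MvPolynomial (Fin m × Fin n) K) :=
  Ideal.span {f | ∃ δ ∈ C, f = Minor2.binom K δ}

/-- Two positions are joined by a vertical edge of some minor of `C`. -/
def vertAdj {m n : ℕ} (C : Set (Minor2 m n)) (p q : Fin m × Fin n) : Prop :=
  ∃ δ ∈ C, δ.VertEdge p q

/-- Two positions are joined by a horizontal edge of some minor of `C`. -/
def horizAdj {m n : ℕ} (C : Set (Minor2 m n)) (p q : Fin m × Fin n) : Prop :=
  ∃ δ ∈ C, δ.HorizEdge p q

/-- The maximal vertical interval of `C` containing a position, encoded as the class of the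
position under connectivity by vertical edges of minors of `C`. -/
def vClass {m n : ℕ} (C : Set (Minor2 m n)) (p : Fin m × Fin n) : Quot (vertAdj C) :=
  Quot.mk _ p

/-- The maximal horizontal interval of `C` containing a position. -/
def hClass {m n : ℕ} (C : Set (Minor2 m n)) (p : Fin m × Fin n) : Quot (horizAdj C) :=
  Quot.mk _ p

/-- The monomial map `φ` with `φ(x_{ab}) = h_i v_j`, where `H_i` and `V_j` are the maximal
horizontal and vertical intervals of `C` containing `x_{ab}` (variables not appearing in any
minor of `C` are sent to products of fresh variables, so that the kernel of `φ` is the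
extension to `S` of the toric ideal `J_C ⊆ S_C`). -/
noncomputable def phiC (K : Type*) [Field K] {m n : ℕ} (C : Set (Minor2 m n)) :
    MvPolynomial (Fin m × Fin n) K →ₐ[K]
      MvPolynomial (Quot (horizAdj C) ⊕ Quot (vertAdj C)) K :=
  aeval fun p => X (Sum.inl (hClass C p)) * X (Sum.inr (vClass C p))

/-- The toric ideal `J_C = ker φ`. -/
noncomputable def toricIdeal (K : Type*) [Field K] {m n : ℕ} (C : Set (Minor2 m n)) :
    Ideal (MvPolynomial (Fin m × Fin n) K) :=
  RingHom.ker (phiC K C)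

/-- A subset `W ⊆ V(C)` is admissible if for every `δ ∈ C` either `W ∩ V(δ) = ∅`
or `W` contains an edge of `δ`. -/
def Admissible {m n : ℕ} (C : Set (Minor2 m n)) (W : Set (Fin m × Fin n)) : Prop :=
  W ⊆ vertexSetOf C ∧
    ∀ δ ∈ C, W ∩ δ.vertexSet = ∅ ∨ ∃ p q, p ∈ W ∧ q ∈ W ∧ δ.IsEdge p q

/-- `C' = {δ ∈ C : V(δ) ∩ W = ∅}`. -/
def minorsAvoiding {m n : ℕ} (C : Set (Minor2 m n)) (W : Set (Fin m × Fin n)) :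
    Set (Minor2 m n) :=
  {δ ∈ C | δ.vertexSet ∩ W = ∅}

/-- The ideal generated by the variables with index in `W`. -/
noncomputable def varIdeal (K : Type*) [Field K] {m n : ℕ} (W : Set (Fin m × Fin n)) :
    Ideal (MvPolynomial (Fin m × Fin n) K) :=
  Ideal.span ((fun p => (X p : MvPolynomial (Fin m × Fin n) K)) '' W)

/-- The prime ideal `P_W(C) = (x_{ij} : x_{ij} ∈ W) + J_{C'}`,
where `C' = {δ ∈ C : V(δ) ∩ W = ∅}`. -/
noncomputable def PW (K : Type*) [Field K] {m n : ℕ} (C : Set (Minor2 m n))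
    (W : Set (Fin m × Fin n)) : Ideal (MvPolynomial (Fin m × Fin n) K) :=
  varIdeal K W + toricIdeal K (minorsAvoiding C W)

/-- A cycle `σ : h_{i₁}, v_{j₁}, h_{i₂}, v_{j₂}, …, h_{i_r}, v_{j_r}` (`r ≥ 2`) of the
bipartite graph `G(C)`, recorded by the intersection vertices
`p k = H_{i_k} ∩ V_{j_k}` and `q k = H_{i_{k+1}} ∩ V_{j_k}` (indices cyclic, `r = len + 2`). -/
structure CycleIn {m n : ℕ} (C : Set (Minor2 m n)) where
  len : ℕ
  p : Fin (len + 2) → Fin m × Fin n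
  q : Fin (len + 2) → Fin m × Fin n
  p_mem : ∀ k, p k ∈ vertexSetOf C
  q_mem : ∀ k, q k ∈ vertexSetOf C
  shareV : ∀ k, vClass C (p k) = vClass C (q k)
  shareH : ∀ k, hClass C (q k) = hClass C (p (k + 1))
  injH : Function.Injective fun k => hClass C (p k)
  injV : Function.Injective fun k => vClass C (p k)

/-- The binomial `f_σ` associated to a cycle `σ` of `G(C)`. -/
noncomputable def cycleBinom (K : Type*) [Field K] {m n : ℕ} {C : Set (Minor2 m n)}
    (σ : CycleIn C) : MvPolynomial (Fin m × Fin n) K :=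
  (∏ k, X (σ.p k)) - (∏ k, X (σ.q k))

/-!
A prime `Q ⊇ I(C)` that contains no variable gives a point of the torus over the residue field of
`Q` at which every minor of `C` vanishes. If all minors of `C` use the column `c`, dividing each
row of this point by its entry in column `c` makes the entries constant along the vertical edges
of `C`: on the column `c` they become `1`, and on the opposite edge they agree because the minor
vanishes. So the point lies in the image of the torus map dual to `φ`, whence `J_C ⊆ Q`. As
`J_C` itself contains no variable, this applies to every prime between `I(C)` and `J_C`.
-/

namespace Minor2

variable {m n : ℕ} {δ : Minor2 m n} {p q : Fin m × Fin n}

lemma HorizEdge.fst_eq (h : δ.HorizEdge p q) : p.1 = q.1 := by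
  rcases h with h | h <;>
    rcases Set.pair_eq_pair_iff.1 h with ⟨rfl, rfl⟩ | ⟨rfl, rfl⟩ <;> rfl

lemma VertEdge.apply_eq {α : Type*} {f : Fin m × Fin n → α} (h : δ.VertEdge p q)
    (h₁ : f (δ.a1, δ.b1) = f (δ.a2, δ.b1)) (h₂ : f (δ.a1, δ.b2) = f (δ.a2, δ.b2)) :
    f p = f q := by
  rcases h with h | h <;>
    rcases Set.pair_eq_pair_iff.1 h with ⟨rfl, rfl⟩ | ⟨rfl, rfl⟩
  exacts [h₁, h₁.symm, h₂, h₂.symm]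

end Minor2

section Ideals

variable {K : Type*} [Field K] {m n : ℕ} {C : Set (Minor2 m n)}

lemma minorIdeal_le_ker_iff {L F : Type*} [Ring L] [FunLike F (MvPolynomial (Fin m × Fin n) K) L]
    [RingHomClass F (MvPolynomial (Fin m × Fin n) K) L] (π : F) :
    minorIdeal K C ≤ RingHom.ker π ↔ ∀ δ ∈ C,
      π (X (δ.a1, δ.b1)) * π (X (δ.a2, δ.b2)) = π (X (δ.a1, δ.b2)) * π (X (δ.a2, δ.b1)) := by
  have map_binom_eq_zero_iff (δ : Minor2 m n) : π (δ.binom K) = 0 ↔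
      π (X (δ.a1, δ.b1)) * π (X (δ.a2, δ.b2)) = π (X (δ.a1, δ.b2)) * π (X (δ.a2, δ.b1)) := by
    rw [Minor2.binom, map_sub, map_mul, map_mul, sub_eq_zero]
  simp only [minorIdeal, Ideal.span_le, ← map_binom_eq_zero_iff]
  exact ⟨fun h δ hδ => h ⟨δ, hδ, rfl⟩, by rintro h _ ⟨δ, hδ, rfl⟩; exact h δ hδ⟩

lemma phiC_X (p : Fin m × Fin n) :
    phiC K C (X p) = X (Sum.inl (hClass C p)) * X (Sum.inr (vClass C p)) :=
  aeval_X _ p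

lemma minorIdeal_le_toricIdeal : minorIdeal K C ≤ toricIdeal K C := by
  refine (minorIdeal_le_ker_iff (phiC K C)).2 fun δ hδ => ?_
  have row₁ : hClass C (δ.a1, δ.b1) = hClass C (δ.a1, δ.b2) := Quot.sound ⟨δ, hδ, .inl rfl⟩
  have row₂ : hClass C (δ.a2, δ.b1) = hClass C (δ.a2, δ.b2) := Quot.sound ⟨δ, hδ, .inr rfl⟩
  have col₁ : vClass C (δ.a1, δ.b1) = vClass C (δ.a2, δ.b1) := Quot.sound ⟨δ, hδ, .inl rfl⟩
  have col₂ : vClass C (δ.a1, δ.b2) = vClass C (δ.a2, δ.b2) := Quot.sound ⟨δ, hδ, .inr rfl⟩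
  simp only [phiC_X, row₁, row₂, col₁, col₂]
  ring

instance toricIdeal_isPrime : (toricIdeal K C).IsPrime :=
  RingHom.ker_isPrime _

lemma X_notMem_toricIdeal (p : Fin m × Fin n) : X p ∉ toricIdeal K C := by
  rw [toricIdeal, RingHom.mem_ker, phiC_X]
  exact mul_ne_zero (X_ne_zero _) (X_ne_zero _)

lemma toricIdeal_le_ker_of_factorization {L : Type*} [CommSemiring L] [Algebra K L]
    (π : MvPolynomial (Fin m × Fin n) K →ₐ[K] L)
    (h : Quot (horizAdj C) → L) (v : Quot (vertAdj C) → L)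
    (hπ : ∀ p, π (X p) = h (hClass C p) * v (vClass C p)) :
    toricIdeal K C ≤ RingHom.ker π := by
  have factors : π = (aeval (Sum.elim h v)).comp (phiC K C) := by
    ext p
    simp only [AlgHom.comp_apply, phiC_X, map_mul, aeval_X, Sum.elim_inl, Sum.elim_inr, hπ]
  intro f hf
  rw [toricIdeal, RingHom.mem_ker] at hf
  rw [RingHom.mem_ker, factors, AlgHom.comp_apply, hf, map_zero]

end Ideals

section CommonColumn

variable {m n : ℕ} {C : Set (Minor2 m n)} {c : Fin n}

lemma exists_interval_factorization {G : Type*} [CommGroupWithZero G]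
    (hC : ∀ δ ∈ C, δ.b1 = c ∨ δ.b2 = c) {x : Fin m × Fin n → G} (hx : ∀ p, x p ≠ 0)
    (hminor : ∀ δ ∈ C,
      x (δ.a1, δ.b1) * x (δ.a2, δ.b2) = x (δ.a1, δ.b2) * x (δ.a2, δ.b1)) :
    ∃ (h : Quot (horizAdj C) → G) (v : Quot (vertAdj C) → G),
      ∀ p, x p = h (hClass C p) * v (vClass C p) := by
  have base_eq (p q) : horizAdj C p q → x (p.1, c) = x (q.1, c) := by
    rintro ⟨_, _, hedge⟩
    rw [hedge.fst_eq]
  have ratio_eq (p q) : vertAdj C p q → x p / x (p.1, c) = x q / x (q.1, c) := by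
    rintro ⟨δ, hδ, hedge⟩
    refine hedge.apply_eq (f := fun p => x p / x (p.1, c)) ?_ ?_ <;>
      rw [div_eq_div_iff (hx _) (hx _)] <;>
      rcases hC δ hδ with rfl | rfl
    · exact mul_comm _ _
    · exact (hminor δ hδ).trans (mul_comm _ _)
    · exact (hminor δ hδ).symm.trans (mul_comm _ _)
    · exact mul_comm _ _
  exact ⟨Quot.lift _ base_eq, Quot.lift _ ratio_eq, fun p => (mul_div_cancel₀ _ (hx _)).symm⟩

variable {K : Type*} [Field K]

theorem toricIdeal_le_of_isPrime_of_X_notMem (hC : ∀ δ ∈ C, δ.b1 = c ∨ δ.b2 = c)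
    {Q : Ideal (MvPolynomial (Fin m × Fin n) K)} [Q.IsPrime] (hIQ : minorIdeal K C ≤ Q)
    (hX : ∀ p, X p ∉ Q) : toricIdeal K C ≤ Q := by
  let π := IsScalarTower.toAlgHom K (MvPolynomial (Fin m × Fin n) K) Q.ResidueField
  have ker_π : RingHom.ker π = Q := Q.ker_algebraMap_residueField
  have hx (p) : π (X p) ≠ 0 := by rw [Ne, ← RingHom.mem_ker, ker_π]; exact hX p
  have hminor := (minorIdeal_le_ker_iff π).1 (hIQ.trans_eq ker_π.symm)
  obtain ⟨h, v, hπ⟩ := exists_interval_factorization hC hx hminor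
  exact (toricIdeal_le_ker_of_factorization π h v hπ).trans_eq ker_π

end CommonColumn

theorem statement2_general (K : Type*) [Field K] {m n : ℕ} {C : Set (Minor2 m n)} {c : Fin n}
    (hC : ∀ δ ∈ C, δ.b1 = c ∨ δ.b2 = c) :
    toricIdeal K C ∈ (minorIdeal K C).minimalPrimes := by
  refine ⟨⟨toricIdeal_isPrime, minorIdeal_le_toricIdeal⟩, ?_⟩
  rintro Q ⟨_, hIQ⟩ hQJ
  exact toricIdeal_le_of_isPrime_of_X_notMem hC hIQ fun p hp => X_notMem_toricIdeal p (hQJ hp)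

theorem statement2 (K : Type*) [Field K] (m n : ℕ) [NeZero n]
    (C : Set (Minor2 m n)) (hC : ∀ δ ∈ C, δ.b1 = 0) :
    toricIdeal K C ∈ (minorIdeal K C).minimalPrimes :=
  statement2_general K fun δ hδ => .inl (hC δ hδ)
end

section
/- Let C be an arbitrary set of corner-interval minors of M and let V be an admissible set of C with corresponding prime ideal P_V(C) = (V) + J_{C''}, where C'' = {δ ∈ C : V(δ) ∩ V = ∅}. Then P_V(C) is a minimal prime of I(C) if and only if for every admissible set W properly contained in V, with C' = {δ ∈ C : V(δ) ∩ W = ∅}, there exists a cycle σ : h_{i₁}, v_{j₁}, h_{i₂}, v_{j₂}, …, h_{i_r}, v_{j_r} of G(C') (r ≥ 2, indices modulo r so i_{r+1} = i₁) with f_σ ∈ J_{C'} ∖ J_{C''} such that either x_{a_{i_k} b_{j_k}} ∉ V for all 1 ≤ k ≤ r, or x_{a_{i_{l+1}} b_{j_l}} ∉ V for all 1 ≤ l ≤ r. -/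
open MvPolynomial

/-!
Every prime `Q` over `I(C)` contains some `P_W(C)`: take for `W` the vertices of `C` whose variables
lie in `Q`. Then `W` is admissible, and the images `x_{ab}` in the residue field of `Q` of the
variables in `V(C')` do not vanish. Since the minors have a side in a common column `c`, the ratio
`x_{ab} / x_{ac}` is constant along vertical intervals, so both monomials of `f_σ` take the same
value for each cycle `σ` of `G(C')`, and thus `J_{C'} ⊆ Q`. Hence `P_V(C)` is minimal iff it
contains no `P_W(C)` with `W ⊊ V`.

To test this on the generators `f_σ` of `J_{C'}`, set the variables in `V` to zero: as the prime
`J_{C''}` contains no monomial, `f_σ` lies in `P_V(C)` iff it lies in `J_{C''}` or each of its two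
monomials contains a variable from `V`.
-/

section AlternatingCycles

variable {P A B : Type*}

/-- `p` and `q` are the two perfect matchings of a cycle of a bipartite multigraph with edge set `P`
and end point maps `h`, `v`: the cycle passes through the edges `p 0, q 0, p 1, q 1, …, p r, q r` in
this order, and the indices are cyclic. The case `r = 0`, where `p 0` and `q 0` are parallel, is
allowed. -/
structure IsAlternatingCycle (h : P → A) (v : P → B) {r : ℕ} (p q : Fin (r + 1) → P) : Prop where
  right_eq : ∀ k, v (p k) = v (q k)
  left_eq : ∀ k, h (q k) = h (p (k + 1))
  left_injective : Function.Injective (h ∘ p)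
  right_injective : Function.Injective (v ∘ p)

variable {h : P → A} {v : P → B}

namespace IsAlternatingCycle

variable {r : ℕ} {p q : Fin (r + 1) → P}

theorem map_eq_of_left {α : Type*} {g : P → α} (hpq : IsAlternatingCycle h v p q)
    (hg : g.FactorsThrough h) : Finset.univ.val.map (g ∘ p) = Finset.univ.val.map (g ∘ q) := by
  have shift := Multiset.map_univ_val_equiv (Equiv.addRight (1 : Fin (r + 1)))
  calc Finset.univ.val.map (g ∘ p)
      = (Finset.univ.val.map (Equiv.addRight (1 : Fin (r + 1)))).map (g ∘ p) := by rw [shift]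
    _ = Finset.univ.val.map (g ∘ q) := by
      rw [Multiset.map_map]
      exact Multiset.map_congr rfl fun k _ => (hg (hpq.left_eq k)).symm

theorem map_eq_of_right {α : Type*} {g : P → α} (hpq : IsAlternatingCycle h v p q)
    (hg : g.FactorsThrough v) : Finset.univ.val.map (g ∘ p) = Finset.univ.val.map (g ∘ q) :=
  Multiset.map_congr rfl fun k _ => hg (hpq.right_eq k)

theorem prod_eq_of_left {M : Type*} [CommMonoid M] {g : P → M} (hpq : IsAlternatingCycle h v p q)
    (hg : g.FactorsThrough h) : ∏ k, g (p k) = ∏ k, g (q k) :=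
  congrArg Multiset.prod (hpq.map_eq_of_left hg)

theorem prod_eq_of_right {M : Type*} [CommMonoid M] {g : P → M} (hpq : IsAlternatingCycle h v p q)
    (hg : g.FactorsThrough v) : ∏ k, g (p k) = ∏ k, g (q k) :=
  congrArg Multiset.prod (hpq.map_eq_of_right hg)

theorem ne (hpq : IsAlternatingCycle h v p q) (hr : r ≠ 0) (k : Fin (r + 1)) : p k ≠ q k := by
  intro hk
  have hfix : k = k + 1 := hpq.left_injective ((congrArg h hk).trans (hpq.left_eq k))
  have : NeZero r := ⟨hr⟩
  simp at hfix

end IsAlternatingCycle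

theorem exists_injective_cycle {α : Type*} {f : α → α} {S : Set α} (hfin : S.Finite)
    (hne : S.Nonempty) (hf : Set.MapsTo f S S) :
    ∃ (r : ℕ) (c : Fin (r + 1) → α),
      Function.Injective c ∧ (∀ k, c k ∈ S) ∧ ∀ k, f (c k) = c (k + 1) := by
  obtain ⟨x, hx, hper⟩ : ∃ x ∈ S, 0 < Function.minimalPeriod f x := by
    obtain ⟨x, hx⟩ := hne
    obtain ⟨i, -, j, -, hij, heq⟩ :=
      Set.infinite_univ.exists_lt_map_eq_of_mapsTo (fun k _ => hf.iterate k hx) hfin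
    refine ⟨f^[i] x, hf.iterate i hx,
      Function.IsPeriodicPt.minimalPeriod_pos (Nat.sub_pos_of_lt hij) ?_⟩
    rw [Function.IsPeriodicPt, Function.IsFixedPt, ← Function.iterate_add_apply,
      Nat.sub_add_cancel hij.le]
    exact heq.symm
  obtain ⟨r, hr⟩ := Nat.exists_eq_add_one_of_ne_zero hper.ne'
  refine ⟨r, fun k => f^[k] x, fun k l hkl => Fin.ext ?_, fun k => hf.iterate k hx, fun k => ?_⟩
  · exact Function.iterate_injOn_Iio_minimalPeriod (k.2.trans_eq hr.symm) (l.2.trans_eq hr.symm) hkl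
  · beta_reduce
    rw [← Function.iterate_succ_apply' f, ← Function.iterate_mod_minimalPeriod_eq, hr, Fin.val_add,
      Fin.val_one', Nat.add_mod_mod]

/-- Leave an edge of `S` through its right end point by an edge of `T`, then return to `S` through
the left end point of that edge. As both edges depend only on the end point they are chosen for, a
cycle of this self-map of `S` meets no end point twice. -/
theorem exists_isAlternatingCycle {S T : Set P} (hfin : S.Finite) (hne : S.Nonempty)
    (hv : v '' S ⊆ v '' T) (hh : h '' T ⊆ h '' S) :
    ∃ (r : ℕ) (p q : Fin (r + 1) → P),
      IsAlternatingCycle h v p q ∧ (∀ k, p k ∈ S) ∧ ∀ k, q k ∈ T := by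
  have : Nonempty P := hne.to_type
  let toT : P → P := Function.invFunOn v T ∘ v
  let toS : P → P := Function.invFunOn h S ∘ h
  have toT_mem : ∀ x ∈ S, toT x ∈ T := fun x hx => Function.invFunOn_mem (hv ⟨x, hx, rfl⟩)
  have v_toT : ∀ x ∈ S, v (toT x) = v x := fun x hx => Function.invFunOn_eq (hv ⟨x, hx, rfl⟩)
  have toS_mem : ∀ y ∈ T, toS y ∈ S := fun y hy => Function.invFunOn_mem (hh ⟨y, hy, rfl⟩)
  have h_toS : ∀ y ∈ T, h (toS y) = h y := fun y hy => Function.invFunOn_eq (hh ⟨y, hy, rfl⟩)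
  obtain ⟨r, p, hinj, hp, hstep⟩ := exists_injective_cycle (f := toS ∘ toT) hfin hne
    fun x hx => toS_mem _ (toT_mem x hx)
  have hq : ∀ k, toT (p k) ∈ T := fun k => toT_mem _ (hp k)
  have hleft : ∀ k, h (toT (p k)) = h (p (k + 1)) := fun k => by
    rw [← hstep, Function.comp_apply, h_toS _ (hq k)]
  have right_injective : Function.Injective (v ∘ p) := fun k l hkl => by
    have hT : toT (p k) = toT (p l) := congrArg (Function.invFunOn v T) hkl
    exact add_right_cancel (hinj ((hstep k).symm.trans ((congrArg toS hT).trans (hstep l))))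
  have left_injective : Function.Injective (h ∘ p) := by
    have hshift : Function.Injective fun k => h (p (k + 1)) := fun k l hkl => by
      have hS : toS (toT (p k)) = toS (toT (p l)) :=
        congrArg (Function.invFunOn h S) ((hleft k).trans (hkl.trans (hleft l).symm))
      exact add_right_cancel (hinj ((hstep k).symm.trans (hS.trans (hstep l))))
    intro k l hkl
    exact sub_left_injective (hshift (a₁ := k - 1) (a₂ := l - 1) (by simpa using hkl))
  exact ⟨r, p, toT ∘ p, ⟨fun k => (v_toT _ (hp k)).symm, hleft, left_injective, right_injective⟩,
    hp, hq⟩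

theorem exists_isAlternatingCycle_le {s t : Multiset P} (hs : s ≠ 0) (hh : s.map h = t.map h)
    (hv : s.map v = t.map v) :
    ∃ (r : ℕ) (p q : Fin (r + 1) → P),
      IsAlternatingCycle h v p q ∧ Finset.univ.val.map p ≤ s ∧ ∀ k, q k ∈ t := by
  obtain ⟨r, p, q, hpq, hp, hq⟩ := exists_isAlternatingCycle (S := {y | y ∈ s}) (T := {y | y ∈ t})
    s.finite_toSet (Multiset.exists_mem_of_ne_zero hs)
    (fun b hb => Multiset.mem_map.mp (hv ▸ Multiset.mem_map.mpr hb))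
    (fun a ha => Multiset.mem_map.mp (hh ▸ Multiset.mem_map.mpr ha))
  refine ⟨r, p, q, hpq, ?_, hq⟩
  rw [Multiset.le_iff_subset (Finset.univ.nodup.map hpq.left_injective.of_comp)]
  intro y hy
  obtain ⟨k, -, rfl⟩ := Multiset.mem_map.mp hy
  exact hp k

/-- Replacing the edges `p` of an alternating cycle in `s` by the edges `q` in `t` creates a common
element, which is then removed from both sides. -/
theorem prod_map_eq_of_isAlternatingCycle {M : Type*} [CommMonoid M] {x : P → M}
    (hx : ∀ (r : ℕ) (p q : Fin (r + 1) → P), IsAlternatingCycle h v p q →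
      ∏ k, x (p k) = ∏ k, x (q k))
    {s t : Multiset P} (hh : s.map h = t.map h) (hv : s.map v = t.map v) :
    (s.map x).prod = (t.map x).prod := by
  induction hN : s.card generalizing s t with
  | zero =>
    obtain rfl := Multiset.card_eq_zero.mp hN
    rw [Multiset.map_eq_zero.mp (hh.symm.trans (Multiset.map_zero h))]
  | succ N ih =>
    have hs : s ≠ 0 := Multiset.card_pos.mp (hN ▸ N.succ_pos)
    obtain ⟨r, p, q, hpq, hps, hq⟩ := exists_isAlternatingCycle_le hs hh hv
    obtain ⟨u, rfl⟩ := Multiset.le_iff_exists_add.mp hps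
    obtain ⟨t', rfl⟩ := Multiset.exists_cons_of_mem (hq 0)
    obtain ⟨s', hs'⟩ : ∃ s', Finset.univ.val.map q + u = q 0 ::ₘ s' :=
      Multiset.exists_cons_of_mem (Multiset.mem_add.mpr
        (Or.inl (Multiset.mem_map_of_mem q (Finset.mem_univ_val 0))))
    have hh' : s'.map h = t'.map h := by
      rw [Multiset.map_add, Multiset.map_map, hpq.map_eq_of_left fun _ _ => id,
        ← Multiset.map_map, ← Multiset.map_add, hs'] at hh
      simpa only [Multiset.map_cons, Multiset.cons_inj_right] using hh
    have hv' : s'.map v = t'.map v := by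
      rw [Multiset.map_add, Multiset.map_map, hpq.map_eq_of_right fun _ _ => id,
        ← Multiset.map_map, ← Multiset.map_add, hs'] at hv
      simpa only [Multiset.map_cons, Multiset.cons_inj_right] using hv
    have hcard : s'.card = N := by
      have hlen : r + 1 + u.card = s'.card + 1 := by simpa using congrArg Multiset.card hs'
      have hlenN : r + 1 + u.card = N + 1 := by simpa using hN
      omega
    have prod_map_add : ∀ c : Fin (r + 1) → P,
        ((Finset.univ.val.map c + u).map x).prod = (∏ k, x (c k)) * (u.map x).prod := fun c => by
      rw [Multiset.map_add, Multiset.prod_add, Multiset.map_map]; rfl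
    rw [prod_map_add, hx r p q hpq, ← prod_map_add, hs', Multiset.map_cons, Multiset.map_cons,
      Multiset.prod_cons, Multiset.prod_cons, ih hh' hv' hcard]

end AlternatingCycles

section EdgeMonomialMap

open Module in
theorem ker_le_ker_of_factorsThrough {R M N L ι κ : Type*} [CommSemiring R]
    [AddCommMonoid M] [AddCommMonoid N] [AddCommMonoid L] [Module R M] [Module R N] [Module R L]
    (b : Basis ι R M) (b' : Basis κ R N) {φ : M →ₗ[R] N} {e : ι → κ} (hφ : ∀ i, φ (b i) = b' (e i))
    {g : M →ₗ[R] L} (hg : (g ∘ b).FactorsThrough e) : LinearMap.ker φ ≤ LinearMap.ker g := by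
  have hfactor : (b'.constr R (Function.extend e (g ∘ b) 0)).comp φ = g :=
    b.ext fun i => by
      rw [LinearMap.comp_apply, hφ, Basis.constr_basis, hg.extend_apply, Function.comp_apply]
  intro f hf
  rw [LinearMap.mem_ker] at hf ⊢
  rw [← hfactor, LinearMap.comp_apply, hf, map_zero]

variable (R : Type*) [CommSemiring R] {P A B : Type*} (h : P → A) (v : P → B)

/-- The homomorphism sending the variable of an edge of a bipartite multigraph to the product of its
end points; its kernel is the toric ideal of the graph. -/
noncomputable def edgeMonomialMap : MvPolynomial P R →ₐ[R] MvPolynomial (A ⊕ B) R :=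
  aeval fun p => X (Sum.inl (h p)) * X (Sum.inr (v p))

theorem edgeMonomialMap_monomial (u : P →₀ ℕ) :
    edgeMonomialMap R h v (monomial u 1) =
      monomial ((u.mapDomain h).sumElim (u.mapDomain v)) 1 := by
  have hprod : ∀ g : P → A ⊕ B,
      (u.prod fun p k => X (R := R) (g p) ^ k) = monomial (u.mapDomain g) 1 := fun g => by
    rw [monomial_eq, C_1, one_mul,
      Finsupp.prod_mapDomain_index (fun _ => pow_zero _) fun _ _ _ => pow_add _ _ _]
  simp only [edgeMonomialMap, aeval_monomial, map_one, one_mul, mul_pow, Finsupp.prod_mul, hprod]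
  rw [monomial_mul, one_mul, Finsupp.sumElim_eq_add, ← Finsupp.mapDomain_comp,
    ← Finsupp.mapDomain_comp]
  rfl

theorem edgeMonomialMap_prod_X {ι : Type*} [Fintype ι] (p : ι → P) :
    edgeMonomialMap R h v (∏ k, X (p k)) =
      (∏ k, X (Sum.inl (h (p k)))) * ∏ k, X (Sum.inr (v (p k))) := by
  simp [edgeMonomialMap, Finset.prod_mul_distrib]

theorem monomial_one_eq_prod_map_toMultiset (u : P →₀ ℕ) :
    monomial u (1 : R) = ((Finsupp.toMultiset u).map X).prod := by
  rw [Finsupp.toMultiset_map, Finsupp.prod_toMultiset,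
    Finsupp.prod_mapDomain_index (fun _ => pow_zero _) (fun _ _ _ => pow_add _ _ _), monomial_eq,
    C_1, one_mul]

theorem ker_edgeMonomialMap_eq_span (R : Type*) [CommRing R] (h : P → A) (v : P → B) :
    RingHom.ker (edgeMonomialMap R h v) = Ideal.span {f | ∃ (r : ℕ) (p q : Fin (r + 1) → P),
      IsAlternatingCycle h v p q ∧ f = ∏ k, X (p k) - ∏ k, X (q k)} := by
  set I := Ideal.span {f : MvPolynomial P R | ∃ (r : ℕ) (p q : Fin (r + 1) → P),
    IsAlternatingCycle h v p q ∧ f = ∏ k, X (p k) - ∏ k, X (q k)} with hI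
  apply le_antisymm
  · let π := Ideal.Quotient.mkₐ R I
    have hcycle : ∀ (r : ℕ) (p q : Fin (r + 1) → P), IsAlternatingCycle h v p q →
        ∏ k, π (X (p k)) = ∏ k, π (X (q k)) := fun r p q hpq => by
      rw [← map_prod, ← map_prod]
      exact Ideal.Quotient.eq.mpr (Ideal.subset_span ⟨r, p, q, hpq, rfl⟩)
    have hfibre : (π.toLinearMap ∘ basisMonomials P R).FactorsThrough
        fun u => (u.mapDomain h).sumElim (u.mapDomain v) := fun u w huw => by
      have hh : u.mapDomain h = w.mapDomain h :=
        Finsupp.ext fun a => DFunLike.congr_fun huw (Sum.inl a)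
      have hv : u.mapDomain v = w.mapDomain v :=
        Finsupp.ext fun b => DFunLike.congr_fun huw (Sum.inr b)
      simp only [Function.comp_apply, coe_basisMonomials, AlgHom.toLinearMap_apply,
        monomial_one_eq_prod_map_toMultiset, map_multiset_prod, Multiset.map_map]
      apply prod_map_eq_of_isAlternatingCycle hcycle <;> simp only [Finsupp.toMultiset_map, hh, hv]
    have hker := ker_le_ker_of_factorsThrough (basisMonomials P R) (basisMonomials (A ⊕ B) R)
      (φ := (edgeMonomialMap R h v).toLinearMap) (edgeMonomialMap_monomial R h v) hfibre
    exact fun f hf => Ideal.Quotient.eq_zero_iff_mem.mp (hker hf)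
  · rw [hI, Ideal.span_le]
    rintro _ ⟨r, p, q, hpq, rfl⟩
    rw [SetLike.mem_coe, RingHom.mem_ker, map_sub, sub_eq_zero, edgeMonomialMap_prod_X,
      edgeMonomialMap_prod_X]
    congr 1
    · exact hpq.prod_eq_of_left fun _ _ => congrArg fun a => X (Sum.inl a)
    · exact hpq.prod_eq_of_right fun _ _ => congrArg fun b => X (Sum.inr b)

end EdgeMonomialMap

namespace Minor2

variable {m n : ℕ} {δ : Minor2 m n} {a : Fin m} {b : Fin n}

theorem mk_mem_vertexSet_iff :
    (a, b) ∈ δ.vertexSet ↔ (a = δ.a1 ∨ a = δ.a2) ∧ (b = δ.b1 ∨ b = δ.b2) := by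
  simp only [vertexSet, Set.mem_insert_iff, Set.mem_singleton_iff, Prod.mk.injEq]
  tauto

theorem exists_isEdge_iff {W : Set (Fin m × Fin n)} :
    (∃ p q, p ∈ W ∧ q ∈ W ∧ δ.IsEdge p q) ↔
      ((δ.a1, δ.b1) ∈ W ∨ (δ.a2, δ.b2) ∈ W) ∧ ((δ.a1, δ.b2) ∈ W ∨ (δ.a2, δ.b1) ∈ W) := by
  constructor
  · rintro ⟨p, q, hp, hq, (h | h) | (h | h)⟩ <;>
      obtain ⟨rfl, rfl⟩ | ⟨rfl, rfl⟩ := Set.pair_eq_pair_iff.mp h <;> tauto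
  · rintro ⟨h | h, h' | h'⟩
    · exact ⟨_, _, h, h', Or.inr (Or.inl rfl)⟩
    · exact ⟨_, _, h, h', Or.inl (Or.inl rfl)⟩
    · exact ⟨_, _, h', h, Or.inl (Or.inr rfl)⟩
    · exact ⟨_, _, h', h, Or.inr (Or.inr rfl)⟩

end Minor2

section Intervals

variable {m n : ℕ} {D : Set (Minor2 m n)} {p q : Fin m × Fin n}

theorem mem_vertexSetOf_iff : p ∈ vertexSetOf D ↔ ∃ δ ∈ D, p ∈ δ.vertexSet := by
  simp only [vertexSetOf, Set.mem_iUnion, exists_prop]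

theorem mk_mem_vertexSetOf {δ : Minor2 m n} {a : Fin m} {b : Fin n} (hδ : δ ∈ D)
    (ha : a = δ.a1 ∨ a = δ.a2) (hb : b = δ.b1 ∨ b = δ.b2) : (a, b) ∈ vertexSetOf D :=
  mem_vertexSetOf_iff.mpr ⟨δ, hδ, Minor2.mk_mem_vertexSet_iff.mpr ⟨ha, hb⟩⟩

theorem factorsThrough_vClass {α : Type*} {g : Fin m × Fin n → α}
    (hg : ∀ δ ∈ D, ∀ b, b = δ.b1 ∨ b = δ.b2 → g (δ.a1, b) = g (δ.a2, b)) :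
    g.FactorsThrough (vClass D) := by
  refine fun p q hpq => congrArg (Quot.lift g ?_) hpq
  rintro _ _ ⟨δ, hδ, h | h⟩ <;>
    obtain ⟨rfl, rfl⟩ | ⟨rfl, rfl⟩ := Set.pair_eq_pair_iff.mp h <;> simp [hg δ hδ]

theorem factorsThrough_hClass {α : Type*} {g : Fin m × Fin n → α}
    (hg : ∀ δ ∈ D, ∀ a, a = δ.a1 ∨ a = δ.a2 → g (a, δ.b1) = g (a, δ.b2)) :
    g.FactorsThrough (hClass D) := by
  refine fun p q hpq => congrArg (Quot.lift g ?_) hpq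
  rintro _ _ ⟨δ, hδ, h | h⟩ <;>
    obtain ⟨rfl, rfl⟩ | ⟨rfl, rfl⟩ := Set.pair_eq_pair_iff.mp h <;> simp [hg δ hδ]

theorem fst_eq_of_hClass_eq (hpq : hClass D p = hClass D q) : p.1 = q.1 :=
  factorsThrough_hClass (fun _ _ _ _ => rfl) hpq

theorem snd_eq_of_vClass_eq (hpq : vClass D p = vClass D q) : p.2 = q.2 :=
  factorsThrough_vClass (fun _ _ _ _ => rfl) hpq

theorem mem_vertexSetOf_of_vClass_eq (hne : p ≠ q) (hpq : vClass D p = vClass D q) :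
    p ∈ vertexSetOf D := by
  by_contra hp
  refine hne (Eq.mp (factorsThrough_vClass (g := (p = ·)) (fun δ hδ b hb => ?_) hpq) rfl)
  have avoids : ∀ a, a = δ.a1 ∨ a = δ.a2 → p ≠ (a, b) := fun a ha hpa =>
    hp (hpa ▸ mk_mem_vertexSetOf hδ ha hb)
  simp only [avoids _ (Or.inl rfl), avoids _ (Or.inr rfl)]

end Intervals

section ToricIdeal

variable (K : Type*) [Field K] {m n : ℕ} {D : Set (Minor2 m n)}

theorem CycleIn.isAlternatingCycle (σ : CycleIn D) :
    IsAlternatingCycle (hClass D) (vClass D) σ.p σ.q :=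
  ⟨σ.shareV, σ.shareH, σ.injH, σ.injV⟩

theorem toricIdeal_eq_span_cycleBinom (D : Set (Minor2 m n)) :
    toricIdeal K D = Ideal.span (Set.range fun σ : CycleIn D => cycleBinom K σ) := by
  refine (ker_edgeMonomialMap_eq_span K (hClass D) (vClass D)).trans
    (le_antisymm (Ideal.span_le.mpr ?_) (Ideal.span_mono ?_))
  · rintro _ ⟨r, p, q, hpq, rfl⟩
    obtain rfl | hr := eq_or_ne r 0
    · have hp : ∀ k, p k = q k := fun k => by
        have hleft := hpq.left_eq k
        rw [show k + 1 = k from Subsingleton.elim (α := Fin 1) _ _] at hleft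
        exact Prod.ext (fst_eq_of_hClass_eq hleft).symm (snd_eq_of_vClass_eq (hpq.right_eq k))
      simp [hp]
    · obtain ⟨len, rfl⟩ := Nat.exists_eq_add_one_of_ne_zero hr
      refine Ideal.subset_span ⟨⟨len, p, q, fun k => ?_, fun k => ?_, hpq.right_eq, hpq.left_eq,
        hpq.left_injective, hpq.right_injective⟩, rfl⟩
      · exact mem_vertexSetOf_of_vClass_eq (hpq.ne hr k) (hpq.right_eq k)
      · exact mem_vertexSetOf_of_vClass_eq (hpq.ne hr k).symm (hpq.right_eq k).symm
  · rintro _ ⟨σ, rfl⟩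
    exact ⟨_, σ.p, σ.q, σ.isAlternatingCycle, rfl⟩

theorem cycleBinom_mem_toricIdeal (σ : CycleIn D) : cycleBinom K σ ∈ toricIdeal K D :=
  toricIdeal_eq_span_cycleBinom K D ▸ Ideal.subset_span ⟨σ, rfl⟩

instance isPrime_toricIdeal (D : Set (Minor2 m n)) : (toricIdeal K D).IsPrime :=
  RingHom.ker_isPrime _

theorem prod_X_notMem_toricIdeal {ι : Type*} [Fintype ι] (p : ι → Fin m × Fin n) :
    ∏ k, X (p k) ∉ toricIdeal K D := by
  rw [Ideal.IsPrime.prod_mem_iff]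
  rintro ⟨k, -, hk⟩
  rw [toricIdeal, RingHom.mem_ker, phiC, aeval_X] at hk
  exact mul_ne_zero (X_ne_zero _) (X_ne_zero _) hk

theorem Minor2.binom_mem_toricIdeal {δ : Minor2 m n} (hδ : δ ∈ D) :
    δ.binom K ∈ toricIdeal K D := by
  have hv₁ : vClass D (δ.a1, δ.b1) = vClass D (δ.a2, δ.b1) :=
    Quot.sound ⟨δ, hδ, Or.inl rfl⟩
  have hv₂ : vClass D (δ.a1, δ.b2) = vClass D (δ.a2, δ.b2) :=
    Quot.sound ⟨δ, hδ, Or.inr rfl⟩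
  have hh₁ : hClass D (δ.a1, δ.b1) = hClass D (δ.a1, δ.b2) :=
    Quot.sound ⟨δ, hδ, Or.inl rfl⟩
  have hh₂ : hClass D (δ.a2, δ.b1) = hClass D (δ.a2, δ.b2) :=
    Quot.sound ⟨δ, hδ, Or.inr rfl⟩
  simp only [toricIdeal, RingHom.mem_ker, phiC, Minor2.binom, map_sub, map_mul, aeval_X, hv₁, hv₂,
    hh₁, hh₂]
  ring

end ToricIdeal

section KillVars

variable {σ R : Type*} [CommSemiring R] {W : Set σ}

variable (R W) in
open Classical in
/-- The substitution of `0` for the variables with index in `W`. -/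
noncomputable def killVars : MvPolynomial σ R →ₐ[R] MvPolynomial σ R :=
  aeval fun p => if p ∈ W then 0 else X p

theorem killVars_X_of_mem {p : σ} (hp : p ∈ W) : killVars R W (X p) = 0 := by
  rw [killVars, aeval_X, if_pos hp]

theorem killVars_X_of_notMem {p : σ} (hp : p ∉ W) : killVars R W (X p) = X p := by
  rw [killVars, aeval_X, if_neg hp]

theorem killVars_prod_X_of_mem {ι : Type*} [Fintype ι] {p : ι → σ} (hp : ∃ k, p k ∈ W) :
    killVars R W (∏ k, X (p k)) = 0 := by
  obtain ⟨k, hk⟩ := hp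
  rw [map_prod]
  exact Finset.prod_eq_zero (Finset.mem_univ k) (killVars_X_of_mem hk)

theorem killVars_prod_X_of_notMem {ι : Type*} [Fintype ι] {p : ι → σ} (hp : ∀ k, p k ∉ W) :
    killVars R W (∏ k, X (p k)) = ∏ k, X (p k) := by
  rw [map_prod]
  exact Finset.prod_congr rfl fun k _ => killVars_X_of_notMem (hp k)

theorem sub_killVars_mem_span_X {R : Type*} [CommRing R] (f : MvPolynomial σ R) :
    f - killVars R W f ∈ Ideal.span (X '' W : Set (MvPolynomial σ R)) := by
  let π := Ideal.Quotient.mkₐ R (Ideal.span (X '' W : Set (MvPolynomial σ R)))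
  have hπ : π.comp (killVars R W) = π := algHom_ext fun p => by
    by_cases hp : p ∈ W
    · rw [AlgHom.comp_apply, killVars_X_of_mem hp, map_zero]
      exact (Ideal.Quotient.eq_zero_iff_mem.mpr
        (Ideal.subset_span (Set.mem_image_of_mem X hp))).symm
    · rw [AlgHom.comp_apply, killVars_X_of_notMem hp]
  exact Ideal.Quotient.eq.mp (DFunLike.congr_fun hπ f).symm

end KillVars

section PW

variable {K : Type*} [Field K] {m n : ℕ} {C D : Set (Minor2 m n)} {V W : Set (Fin m × Fin n)}

theorem toricIdeal_le_comap_killVars (hW : ∀ p ∈ vertexSetOf D, p ∉ W) :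
    toricIdeal K D ≤ (toricIdeal K D).comap (killVars K W) := by
  conv_lhs => rw [toricIdeal_eq_span_cycleBinom]
  rw [Ideal.span_le, Set.range_subset_iff]
  intro σ
  have killVars_cycleBinom : killVars K W (cycleBinom K σ) = cycleBinom K σ := by
    rw [cycleBinom, map_sub, killVars_prod_X_of_notMem fun k => hW _ (σ.p_mem k),
      killVars_prod_X_of_notMem fun k => hW _ (σ.q_mem k)]
  rw [SetLike.mem_coe, Ideal.mem_comap, killVars_cycleBinom]
  exact cycleBinom_mem_toricIdeal K σ

theorem notMem_of_mem_vertexSetOf_minorsAvoiding {p : Fin m × Fin n}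
    (hp : p ∈ vertexSetOf (minorsAvoiding C W)) : p ∉ W := by
  obtain ⟨δ, hδ, hpδ⟩ := mem_vertexSetOf_iff.mp hp
  exact fun hpW => hδ.2.subset ⟨hpδ, hpW⟩

theorem PW_eq_comap_killVars :
    PW K C W = (toricIdeal K (minorsAvoiding C W)).comap (killVars K W) := by
  refine le_antisymm (sup_le (Ideal.span_le.mpr ?_) ?_) fun f hf => ?_
  · rintro _ ⟨p, hp, rfl⟩
    simp only [SetLike.mem_coe, Ideal.mem_comap, killVars_X_of_mem hp, zero_mem]
  · exact toricIdeal_le_comap_killVars fun _ => notMem_of_mem_vertexSetOf_minorsAvoiding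
  · rw [← sub_add_cancel f (killVars K W f)]
    exact Submodule.add_mem_sup (sub_killVars_mem_span_X f) hf

theorem mem_PW_iff {f : MvPolynomial (Fin m × Fin n) K} :
    f ∈ PW K C W ↔ killVars K W f ∈ toricIdeal K (minorsAvoiding C W) := by
  rw [PW_eq_comap_killVars, Ideal.mem_comap]

instance isPrime_PW : (PW K C W).IsPrime := by
  rw [PW_eq_comap_killVars]
  infer_instance

theorem varIdeal_le_PW : varIdeal K W ≤ PW K C W := le_sup_left

theorem X_mem_PW_iff {p : Fin m × Fin n} : X p ∈ PW K C W ↔ p ∈ W := by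
  refine ⟨fun hp => ?_, fun hp => varIdeal_le_PW (Ideal.subset_span ⟨p, hp, rfl⟩)⟩
  by_contra hpW
  rw [mem_PW_iff, killVars_X_of_notMem hpW] at hp
  exact prod_X_notMem_toricIdeal K (fun _ : Unit => p) (by simpa using hp)

theorem prod_X_sub_prod_X_mem_PW_iff {ι κ : Type*} [Fintype ι] [Fintype κ]
    {p : ι → Fin m × Fin n} {q : κ → Fin m × Fin n} :
    (∏ k, X (p k) - ∏ l, X (q l)) ∈ PW K C V ↔
      (∏ k, X (p k) - ∏ l, X (q l)) ∈ toricIdeal K (minorsAvoiding C V) ∨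
        (∃ k, p k ∈ V) ∧ ∃ l, q l ∈ V := by
  refine ⟨fun h => ?_, fun h => h.elim (fun h => Ideal.mem_sup_right h) fun ⟨hp, hq⟩ => ?_⟩
  · rw [mem_PW_iff, map_sub] at h
    by_cases hp : ∃ k, p k ∈ V <;> by_cases hq : ∃ l, q l ∈ V
    · exact Or.inr ⟨hp, hq⟩
    · rw [killVars_prod_X_of_mem hp, killVars_prod_X_of_notMem (not_exists.mp hq), zero_sub,
        neg_mem_iff] at h
      exact absurd h (prod_X_notMem_toricIdeal K q)
    · rw [killVars_prod_X_of_notMem (not_exists.mp hp), killVars_prod_X_of_mem hq, sub_zero] at h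
      exact absurd h (prod_X_notMem_toricIdeal K p)
    · rw [killVars_prod_X_of_notMem (not_exists.mp hp),
        killVars_prod_X_of_notMem (not_exists.mp hq)] at h
      exact Or.inl h
  · rw [mem_PW_iff, map_sub, killVars_prod_X_of_mem hp, killVars_prod_X_of_mem hq, sub_self]
    exact zero_mem _

theorem Admissible.minorIdeal_le_PW (hW : Admissible C W) : minorIdeal K C ≤ PW K C W := by
  rw [minorIdeal, Ideal.span_le]
  rintro _ ⟨δ, hδ, rfl⟩
  rcases hW.2 δ hδ with hdisj | hedge
  · exact Ideal.mem_sup_right (Minor2.binom_mem_toricIdeal K ⟨hδ, Set.inter_comm _ _ ▸ hdisj⟩)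
  · obtain ⟨hdiag, hanti⟩ := Minor2.exists_isEdge_iff.mp hedge
    refine sub_mem (isPrime_PW.mul_mem_iff_mem_or_mem.mpr ?_)
      (isPrime_PW.mul_mem_iff_mem_or_mem.mpr ?_) <;>
      simpa only [X_mem_PW_iff]

theorem PW_le_PW_iff (hWV : W ⊆ V) :
    PW K C W ≤ PW K C V ↔ ∀ σ : CycleIn (minorsAvoiding C W), cycleBinom K σ ∈ PW K C V := by
  have hvar : varIdeal K W ≤ PW K C V :=
    (Ideal.span_mono (Set.image_mono hWV)).trans varIdeal_le_PW
  rw [PW, Ideal.add_eq_sup, sup_le_iff, toricIdeal_eq_span_cycleBinom, Ideal.span_le,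
    Set.range_subset_iff]
  exact and_iff_right hvar

end PW

section PrimesOverMinorIdeal

variable {K : Type*} [Field K] {m n : ℕ} {C D : Set (Minor2 m n)}

theorem admissible_setOf_X_mem {Q : Ideal (MvPolynomial (Fin m × Fin n) K)} [Q.IsPrime]
    (hQ : minorIdeal K C ≤ Q) : Admissible C {p ∈ vertexSetOf C | X p ∈ Q} := by
  refine ⟨fun p hp => hp.1, fun δ hδ => or_iff_not_imp_left.mpr fun hmeet => ?_⟩
  have hbinom : δ.binom K ∈ Q := hQ (Ideal.subset_span ⟨δ, hδ, rfl⟩)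
  have diag_iff_anti : (X (δ.a1, δ.b1) ∈ Q ∨ X (δ.a2, δ.b2) ∈ Q) ↔
      (X (δ.a1, δ.b2) ∈ Q ∨ X (δ.a2, δ.b1) ∈ Q) := by
    simp only [← Ideal.IsPrime.mul_mem_iff_mem_or_mem ‹Q.IsPrime›]
    exact ⟨fun h => (Q.sub_mem_iff_right h).mp hbinom, fun h => (Q.sub_mem_iff_left h).mp hbinom⟩
  have hC : ∀ {a b}, (a = δ.a1 ∨ a = δ.a2) → (b = δ.b1 ∨ b = δ.b2) → (a, b) ∈ vertexSetOf C :=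
    mk_mem_vertexSetOf hδ
  obtain ⟨p, ⟨-, hpQ⟩, hp⟩ := Set.nonempty_iff_ne_empty.mpr hmeet
  rw [Minor2.exists_isEdge_iff]
  simp only [Set.mem_ofPred_eq, hC, true_or, or_true, true_and]
  rcases hp with rfl | rfl | rfl | rfl <;> tauto

theorem mk_fst_mem_vertexSetOf {c : Fin n} (hD : ∀ δ ∈ D, δ.b1 = c ∨ δ.b2 = c)
    {p : Fin m × Fin n} (hp : p ∈ vertexSetOf D) : (p.1, c) ∈ vertexSetOf D := by
  obtain ⟨δ, hδ, hpδ⟩ := mem_vertexSetOf_iff.mp hp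
  exact mk_mem_vertexSetOf hδ (Minor2.mk_mem_vertexSet_iff.mp hpδ).1
    ((hD δ hδ).imp Eq.symm Eq.symm)

variable {F : Type*} [Field F] {x : MvPolynomial (Fin m × Fin n) K →+* F} {c : Fin n}

theorem factorsThrough_vClass_div (hD : ∀ δ ∈ D, δ.b1 = c ∨ δ.b2 = c)
    (hx : ∀ p ∈ vertexSetOf D, x (X p) ≠ 0) (hI : minorIdeal K D ≤ RingHom.ker x) :
    (fun p => x (X p) / x (X (p.1, c))).FactorsThrough (vClass D) := by
  refine factorsThrough_vClass fun δ hδ b hb => ?_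
  have hbinom : x (X (δ.a1, δ.b1)) * x (X (δ.a2, δ.b2)) =
      x (X (δ.a1, δ.b2)) * x (X (δ.a2, δ.b1)) := by
    have hmem : x (δ.binom K) = 0 := hI (Ideal.subset_span ⟨δ, hδ, rfl⟩)
    simpa only [Minor2.binom, map_sub, map_mul, sub_eq_zero] using hmem
  have hc : ∀ a, a = δ.a1 ∨ a = δ.a2 → x (X (a, c)) ≠ 0 := fun a ha =>
    hx _ (mk_mem_vertexSetOf hδ ha ((hD δ hδ).imp Eq.symm Eq.symm))
  rw [div_eq_div_iff (hc _ (Or.inl rfl)) (hc _ (Or.inr rfl))]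
  rcases hD δ hδ with rfl | rfl <;> rcases hb with rfl | rfl
  · exact mul_comm _ _
  · linear_combination -hbinom
  · linear_combination hbinom
  · exact mul_comm _ _

theorem toricIdeal_le_ker (hD : ∀ δ ∈ D, δ.b1 = c ∨ δ.b2 = c)
    (hx : ∀ p ∈ vertexSetOf D, x (X p) ≠ 0) (hI : minorIdeal K D ≤ RingHom.ker x) :
    toricIdeal K D ≤ RingHom.ker x := by
  have row_factorsThrough : (fun p => x (X (p.1, c))).FactorsThrough (hClass D) :=
    fun _ _ hpq => by simp only [fst_eq_of_hClass_eq hpq]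
  have prod_eq : ∀ {r : ℕ} {y : Fin r → Fin m × Fin n}, (∀ k, y k ∈ vertexSetOf D) →
      ∏ k, x (X (y k)) = (∏ k, x (X (y k)) / x (X ((y k).1, c))) * ∏ k, x (X ((y k).1, c)) :=
    fun hy => by
      rw [← Finset.prod_mul_distrib]
      exact Finset.prod_congr rfl fun k _ =>
        (div_mul_cancel₀ _ (hx _ (mk_fst_mem_vertexSetOf hD (hy k)))).symm
  rw [toricIdeal_eq_span_cycleBinom, Ideal.span_le, Set.range_subset_iff]
  intro σ
  change x (∏ k, X (σ.p k) - ∏ k, X (σ.q k)) = 0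
  rw [map_sub, map_prod, map_prod, sub_eq_zero, prod_eq σ.p_mem, prod_eq σ.q_mem,
    σ.isAlternatingCycle.prod_eq_of_left row_factorsThrough,
    σ.isAlternatingCycle.prod_eq_of_right (factorsThrough_vClass_div hD hx hI)]

theorem exists_admissible_PW_le (hC : ∀ δ ∈ C, δ.b1 = c ∨ δ.b2 = c)
    {Q : Ideal (MvPolynomial (Fin m × Fin n) K)} [Q.IsPrime] (hQ : minorIdeal K C ≤ Q) :
    ∃ W, Admissible C W ∧ PW K C W ≤ Q := by
  refine ⟨{p ∈ vertexSetOf C | X p ∈ Q}, admissible_setOf_X_mem hQ,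
    sup_le (Ideal.span_le.mpr ?_) ?_⟩
  · rintro _ ⟨p, hp, rfl⟩
    exact hp.2
  · let x := algebraMap (MvPolynomial (Fin m × Fin n) K) Q.ResidueField
    have hker : RingHom.ker x = Q := Q.ker_algebraMap_residueField
    refine le_trans (toricIdeal_le_ker (x := x) (fun δ hδ => hC δ hδ.1) (fun p hp hpQ => ?_) ?_)
      hker.le
    · have hpC : p ∈ vertexSetOf C := Set.biUnion_subset_biUnion_left (Set.sep_subset _ _) hp
      exact notMem_of_mem_vertexSetOf_minorsAvoiding hp ⟨hpC, hker.le hpQ⟩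
    · rw [hker]
      refine le_trans (Ideal.span_mono ?_) hQ
      rintro _ ⟨δ, hδ, rfl⟩
      exact ⟨δ, hδ.1, rfl⟩

theorem PW_mem_minimalPrimes_iff (hC : ∀ δ ∈ C, δ.b1 = c ∨ δ.b2 = c)
    {V : Set (Fin m × Fin n)} (hV : Admissible C V) :
    PW K C V ∈ (minorIdeal K C).minimalPrimes ↔
      ∀ W, Admissible C W → W ⊂ V → ¬ PW K C W ≤ PW K C V := by
  have subset_of_le : ∀ {U W}, PW K C U ≤ PW K C W → U ⊆ W := fun hle p hp =>
    X_mem_PW_iff.mp (hle (X_mem_PW_iff.mpr hp))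
  constructor
  · intro hmin W hW hWV hle
    exact hWV.2 (subset_of_le (hmin.2 ⟨isPrime_PW, hW.minorIdeal_le_PW⟩ hle))
  · refine fun h => ⟨⟨isPrime_PW, hV.minorIdeal_le_PW⟩, fun Q ⟨_, hQ⟩ hQV => ?_⟩
    obtain ⟨W, hW, hWQ⟩ := exists_admissible_PW_le hC hQ
    obtain rfl | hWV := (subset_of_le (hWQ.trans hQV)).eq_or_ssubset
    · exact hWQ
    · exact absurd (hWQ.trans hQV) (h W hW hWV)

end PrimesOverMinorIdeal

theorem statement7_general (K : Type*) [Field K] {m n : ℕ} {c : Fin n}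
    {C : Set (Minor2 m n)} (hC : ∀ δ ∈ C, δ.b1 = c ∨ δ.b2 = c)
    {V : Set (Fin m × Fin n)} (hV : Admissible C V) :
    PW K C V ∈ (minorIdeal K C).minimalPrimes ↔
      ∀ W : Set (Fin m × Fin n), Admissible C W → W ⊂ V →
        ∃ σ : CycleIn (minorsAvoiding C W),
          cycleBinom K σ ∈ toricIdeal K (minorsAvoiding C W) ∧
          cycleBinom K σ ∉ toricIdeal K (minorsAvoiding C V) ∧
          ((∀ k, σ.p k ∉ V) ∨ (∀ l, σ.q l ∉ V)) := by
  rw [PW_mem_minimalPrimes_iff hC hV]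
  refine forall₃_congr fun W _ hWV => ?_
  rw [PW_le_PW_iff hWV.1, not_forall]
  refine exists_congr fun σ => ?_
  rw [cycleBinom, prod_X_sub_prod_X_mem_PW_iff, not_or, not_and_or, not_exists, not_exists]
  exact (and_iff_right (cycleBinom_mem_toricIdeal K σ)).symm

theorem statement7 (K : Type*) [Field K] (m n : ℕ) [NeZero n]
    (C : Set (Minor2 m n)) (hC : ∀ δ ∈ C, δ.b1 = 0)
    (V : Set (Fin m × Fin n)) (hV : Admissible C V) :
    PW K C V ∈ (minorIdeal K C).minimalPrimes ↔
      ∀ W : Set (Fin m × Fin n), Admissible C W → W ⊂ V →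
        ∃ σ : CycleIn (minorsAvoiding C W),
          cycleBinom K σ ∈ toricIdeal K (minorsAvoiding C W) ∧
          cycleBinom K σ ∉ toricIdeal K (minorsAvoiding C V) ∧
          ((∀ k, σ.p k ∉ V) ∨ (∀ l, σ.q l ∉ V)) :=
  statement7_general K (fun δ hδ => Or.inl (hC δ hδ)) hV
end
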